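/- arXiv:2204.10671 — 2 statements merged into one kernel-verified Lean document; each statement's English description precedes it below -/
import Mathlib

section
/- Let q ≥ 2 and k ≥ 1 be integers and let f : {0,1}^q → {0,1} be a Boolean function such that (i) every deterministic kOBDD (with any variable order) representing f has width at least d, and (ii) there is a commutative deterministic kOBDD of width w representing f. Then there exists a total Boolean function g : {0,1}^n → {0,1}, with n = q(⌈log₂ q⌉+1), such that g agrees with the partial function ord(f) on its domain, every deterministic kOBDD (with any variable order) representing g has width at least d, and there is a deterministic kOBDD of width at most 2^{⌈log₂ q⌉}·w representing g. -/
set_option maxHeartbeats 1000000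
/-- `binVal l a = Σ_{j=1}^l a_j 2^{l-j}` (a₁ is the most significant bit). -/
def binVal (l : ℕ) (a : Fin l → Bool) : ℕ :=
  ∑ j : Fin l, if a j then 2 ^ (l - 1 - (j : ℕ)) else 0
/-- A deterministic kOBDD of width `w` over `n` variables: `k` layers reading in order `ord`. -/
structure KOBDD (k n w : ℕ) where
  ord : Equiv.Perm (Fin n)
  tr : Fin k → Fin n → Fin w → Bool → Fin w
  start : Fin w
  acc : Finset (Fin w)

namespace KOBDD

def layerRun {k n w : ℕ} (M : KOBDD k n w) (t : Fin k) (s : Fin w) (x : Fin n → Bool) : Fin w :=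
  (List.finRange n).foldl (fun a i => M.tr t i a (x (M.ord i))) s

def final {k n w : ℕ} (M : KOBDD k n w) (x : Fin n → Bool) : Fin w :=
  (List.finRange k).foldl (fun s t => M.layerRun t s x) M.start

def Accepts {k n w : ℕ} (M : KOBDD k n w) (x : Fin n → Bool) : Prop :=
  M.final x ∈ M.acc

def Represents {k n w : ℕ} (M : KOBDD k n w) (f : (Fin n → Bool) → Bool) : Prop :=
  ∀ x, M.Accepts x ↔ f x = true

def RepresentsPartial {k n w : ℕ} (M : KOBDD k n w) (F : (Fin n → Bool) → Option Bool) : Prop :=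
  ∀ x b, F x = some b → (M.Accepts x ↔ b = true)

/-- Each layer is a commutative OBDD: for every reading order `π`, the reordered layer
(with transitions `tr' i = tr (ord⁻¹(π i))`) computes, from every start state,
the same state transformation as the original layer. -/
def Commutative {k n w : ℕ} (M : KOBDD k n w) : Prop :=
  ∀ (π : Equiv.Perm (Fin n)) (t : Fin k) (s : Fin w) (x : Fin n → Bool),
    (List.finRange n).foldl (fun a i => M.tr t (M.ord.symm (π i)) a (x (π i))) s =
      M.layerRun t s x

end KOBDD
lemma zIdx {q l : ℕ} (i : Fin q) (j : Fin l) : (i : ℕ) * l + (j : ℕ) < q * (l + 1) :=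
  calc (i : ℕ) * l + (j : ℕ) < (i : ℕ) * l + l := Nat.add_lt_add_left j.isLt _
    _ = ((i : ℕ) + 1) * l := by ring
    _ ≤ q * l := Nat.mul_le_mul i.isLt (Nat.le_refl l)
    _ ≤ q * (l + 1) := Nat.mul_le_mul (Nat.le_refl q) (Nat.le_succ l)

lemma yIdx {q l : ℕ} (i : Fin q) : q * l + (i : ℕ) < q * (l + 1) :=
  calc q * l + (i : ℕ) < q * l + q := Nat.add_lt_add_left i.isLt _
    _ = q * (l + 1) := by ring

/-- The bit `z_{i,j}` of an input to the reordered function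
(layout: `z_{1,1},…,z_{q,l}, y_1,…,y_q`). -/
def zOf (q l : ℕ) (x : Fin (q * (l + 1)) → Bool) (i : Fin q) (j : Fin l) : Bool :=
  x ⟨(i : ℕ) * l + (j : ℕ), zIdx i j⟩

/-- The value bit `y_i` of an input to the reordered function. -/
def yOf (q l : ℕ) (x : Fin (q * (l + 1)) → Bool) (i : Fin q) : Bool :=
  x ⟨q * l + (i : ℕ), yIdx i⟩

/-- `z_{1,j} ⊕ ⋯ ⊕ z_{i,j}`. -/
def xorZ (q l : ℕ) (x : Fin (q * (l + 1)) → Bool) (i : Fin q) (j : Fin l) : Bool :=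
  decide ((Finset.univ.filter (fun i' : Fin q => i' ≤ i ∧ zOf q l x i' j = true)).card % 2 = 1)

/-- `θ(i) − 1` for the plain reordering. -/
def addrOrd (q l : ℕ) (x : Fin (q * (l + 1)) → Bool) (i : Fin q) : ℕ :=
  binVal l (zOf q l x i)

/-- `θ(i) − 1` for the xor-reordering. -/
def addrXor (q l : ℕ) (x : Fin (q * (l + 1)) → Bool) (i : Fin q) : ℕ :=
  binVal l (xorZ q l x i)

/-- The partial reordered function: defined exactly when the addresses form a
permutation of `{1,…,q}`; then position `j` of `f`'s argument is `y_{θ⁻¹(j)}`. -/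
noncomputable def ordPartial (q l : ℕ) (f : (Fin q → Bool) → Bool)
    (addr : (Fin (q * (l + 1)) → Bool) → Fin q → ℕ) :
    (Fin (q * (l + 1)) → Bool) → Option Bool := fun x =>
  if h : ∃ σ : Equiv.Perm (Fin q), ∀ i, addr x i = (σ i : ℕ) then
    some (f fun j => yOf q l x (h.choose.symm j))
  else none

/-- The partial function `ord(f)`. -/
noncomputable def ordF (q : ℕ) (f : (Fin q → Bool) → Bool) :
    (Fin (q * (Nat.clog 2 q + 1)) → Bool) → Option Bool :=
  ordPartial q (Nat.clog 2 q) f (addrOrd q (Nat.clog 2 q))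

/-- The partial function `⊕ord(f)`. -/
noncomputable def xorOrdF (q : ℕ) (f : (Fin q → Bool) → Bool) :
    (Fin (q * (Nat.clog 2 q + 1)) → Bool) → Option Bool :=
  ordPartial q (Nat.clog 2 q) f (addrXor q (Nat.clog 2 q))

/-!
Since `M` is commutative, it computes `f` from the bits `y_1, …, y_q` in the order in which they
arrive, provided that each `y_i` is treated as the variable with index `θ(i)`. A program reading
`z_i` just before `y_i` only has to remember the current address, which multiplies the width by
`2 ^ ⌈log₂ q⌉`, and the function it computes is the total extension of `ord(f)`.

Conversely, let `N` represent an extension of `ord(f)`, and fix the addresses to those of the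
identity permutation. What remains is `f` on the `y_i`, and steps that read fixed bits are merged
into neighbouring steps, so the width does not grow.
-/

section Folds

variable {α β γ S : Type*}

lemma foldl_update_of_notMem [DecidableEq β] (G : β → S → γ → S) (g : S → γ → S) {b : β}
    {L : List β} (hb : b ∉ L) (y : β → γ) (s : S) :
    L.foldl (fun s i => Function.update G b g i s (y i)) s =
      L.foldl (fun s i => G i s (y i)) s :=
  List.foldl_ext _ _ _ fun s i hi => by
    rw [Function.update_of_ne (ne_of_mem_of_not_mem hi hb)]

lemma exists_foldl_filterMap_getLeft? (r : α → β ⊕ γ) (F : α → S → γ → S) (L : List α)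
    (hL : (L.filterMap fun v => (r v).getLeft?).Nodup) :
    ∃ (G : β → S → γ → S) (φ : S → S), ∀ (y : β → γ) (s : S),
      L.foldl (fun s v => F v s (Sum.elim y id (r v))) s =
        φ ((L.filterMap fun v => (r v).getLeft?).foldl (fun s i => G i s (y i)) s) := by
  classical
  induction L using List.reverseRecOn with
  | nil => exact ⟨fun _ s _ => s, id, fun _ _ => rfl⟩
  | append_singleton L v ih =>
    rw [List.filterMap_append] at hL
    obtain ⟨G, φ, h⟩ := ih hL.of_append_left
    cases hv : r v with
    | inr c => exact ⟨G, fun s => F v (φ s) c, fun y s => by simp [h, hv]⟩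
    | inl b =>
      have hb : b ∉ L.filterMap fun v => (r v).getLeft? := fun hmem =>
        List.disjoint_of_nodup_append hL hmem (by simp [hv])
      refine ⟨Function.update G b fun s a => F v (φ s) a, id, fun y s => ?_⟩
      simp [h, hv, foldl_update_of_notMem G _ hb]

lemma exists_foldl_eq_comp_foldl (φ : S → S) (G : β → S → γ → S) {L : List β} (hL : L.Nodup)
    (hne : L ≠ []) :
    ∃ G' : β → S → γ → S, ∀ (y : β → γ) (s : S),
      L.foldl (fun s i => G' i s (y i)) s = φ (L.foldl (fun s i => G i s (y i)) s) := by
  classical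
  obtain ⟨L', b, rfl⟩ := (List.eq_nil_or_concat' L).resolve_left hne
  have hb : b ∉ L' := fun hmem => List.disjoint_of_nodup_append hL hmem (by simp)
  exact ⟨Function.update G b fun s a => φ (G b s a), fun y s => by
    simp [foldl_update_of_notMem G _ hb]⟩

lemma foldl_update_eq_ite [DecidableEq β] (v a : β → γ) (L : List β) :
    L.foldl (fun a j => Function.update a j (v j)) a = fun j => if j ∈ L then v j else a j := by
  induction L generalizing a with
  | nil => simp
  | cons b L ih =>
    rw [List.foldl_cons, ih]
    funext j
    by_cases hj : j = b <;> simp [hj]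

lemma finRange_mul_eq_flatMap (m n : ℕ) :
    List.finRange (m * n) =
      (List.finRange m).flatMap fun i =>
        (List.finRange n).map fun j => finProdFinEquiv (i, j) := by
  rw [← List.ofFn_id, List.ofFn_mul, List.flatMap]
  simp only [List.ofFn_eq_map]
  congr 1
  refine List.map_congr_left fun i _ => List.map_congr_left fun j _ => Fin.ext ?_
  simp [mul_comm, add_comm]

lemma foldl_finRange_mul {m n : ℕ} (F : S → Fin m × Fin n → S) (s : S) :
    (List.finRange (m * n)).foldl (fun s p => F s (finProdFinEquiv.symm p)) s =
      (List.finRange m).foldl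
        (fun s i => (List.finRange n).foldl (fun s j => F s (i, j)) s) s := by
  simp only [finRange_mul_eq_flatMap, List.foldl_flatMap, List.foldl_map, Equiv.symm_apply_apply]

lemma exists_perm_map_finRange_eq {n : ℕ} {L : List (Fin n)} (hL : L.Nodup)
    (hmem : ∀ i, i ∈ L) : ∃ π : Equiv.Perm (Fin n), (List.finRange n).map π = L := by
  have hlen : L.length = n := by
    simpa using Fintype.card_congr (hL.getEquivOfForallMemList L hmem)
  refine ⟨(finCongr hlen.symm).trans (hL.getEquivOfForallMemList L hmem), ?_⟩
  exact List.ext_getElem (by simp [hlen]) fun i _ _ => by simp [List.Nodup.getEquivOfForallMemList]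

end Folds

namespace KOBDD

lemma exists_accepts_iff_foldl_mem {k n : ℕ} {S : Type*} [Fintype S] (π : Equiv.Perm (Fin n))
    (tr : Fin k → Fin n → S → Bool → S) (s₀ : S) (A : Set S) :
    ∃ N : KOBDD k n (Fintype.card S), ∀ x, N.Accepts x ↔
      (List.finRange k).foldl
        (fun s t => (List.finRange n).foldl (fun s i => tr t i s (x (π i))) s) s₀ ∈ A := by
  classical
  let E := Fintype.equivFin S
  let N : KOBDD k n (Fintype.card S) :=
    { ord := π
      tr := fun t i s b => E (tr t i (E.symm s) b)
      start := E s₀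
      acc := Finset.univ.filter fun s => E.symm s ∈ A }
  have layerRun_eq (t s x) : N.layerRun t (E s) x =
      E ((List.finRange n).foldl (fun s i => tr t i s (x (π i))) s) :=
    List.foldl_hom E fun _ _ => by simp [N]
  have final_eq (x) : N.final x = E ((List.finRange k).foldl
      (fun s t => (List.finRange n).foldl (fun s i => tr t i s (x (π i))) s) s₀) :=
    List.foldl_hom E fun s t => layerRun_eq t s x
  exact ⟨N, fun x => by simp [Accepts, final_eq, N]⟩

/-- Steps reading a constant are merged into the next step reading a variable, those at the end
of the layer into the last such step. -/
lemma exists_accepts_iff_substitute {k n q w : ℕ} (hq : 0 < q) (N : KOBDD k n w)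
    {r : Fin n → Fin q ⊕ Bool} (hr : ∀ i, ∃! v, r v = .inl i) :
    ∃ M : KOBDD k q w, ∀ y, M.Accepts y ↔ N.Accepts fun v => Sum.elim y id (r v) := by
  let V := (List.finRange n).map N.ord
  let L := V.filterMap fun v => (r v).getLeft?
  have hV : V.Nodup := (List.nodup_finRange n).map N.ord.injective
  have hL : L.Nodup := hV.filterMap fun v v' i hv hv' =>
    (hr i).unique (Sum.getLeft?_eq_some_iff.1 hv) (Sum.getLeft?_eq_some_iff.1 hv')
  have mem_L (i : Fin q) : i ∈ L := by
    obtain ⟨v, hv, -⟩ := hr i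
    exact List.mem_filterMap.2
      ⟨v, List.mem_map.2 ⟨N.ord.symm v, by simp, by simp⟩, by simp [hv]⟩
  have hstep (t : Fin k) : ∃ G : Fin q → Fin w → Bool → Fin w, ∀ y s,
      L.foldl (fun s i => G i s (y i)) s =
        V.foldl (fun s v => N.tr t (N.ord.symm v) s (Sum.elim y id (r v))) s := by
    obtain ⟨G, φ, hG⟩ := exists_foldl_filterMap_getLeft? r (fun v => N.tr t (N.ord.symm v)) V hL
    obtain ⟨G', hG'⟩ := exists_foldl_eq_comp_foldl φ G hL (List.ne_nil_of_mem (mem_L ⟨0, hq⟩))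
    exact ⟨G', fun y s => (hG' y s).trans (hG y s).symm⟩
  choose G hG using hstep
  obtain ⟨π, hπ⟩ := exists_perm_map_finRange_eq hL mem_L
  let M : KOBDD k q w := ⟨π, fun t i => G t (π i), N.start, N.acc⟩
  have layerRun_eq (t s y) : M.layerRun t s y = N.layerRun t s fun v => Sum.elim y id (r v) := by
    simpa [← hπ, V, M, layerRun, List.foldl_map] using hG t y s
  exact ⟨M, fun y => by simp only [Accepts, final, layerRun_eq, M]⟩

end KOBDD

section Reordering

variable {q l : ℕ}

lemma exists_binVal_eq {i : ℕ} (hi : i < 2 ^ l) : ∃ a : Fin l → Bool, binVal l a = i := by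
  let d : Fin l → Fin 2 := finFunctionFinEquiv.symm ⟨i, hi⟩
  have hd : ∑ j, (d j : ℕ) * 2 ^ (j : ℕ) = i := by
    rw [← finFunctionFinEquiv_apply, Equiv.apply_symm_apply]
  refine ⟨fun j => decide (d j.rev = 1), ?_⟩
  rw [← hd, ← Equiv.sum_comp Fin.revPerm, binVal]
  refine Finset.sum_congr rfl fun j _ => ?_
  have hj : l - 1 - (j : ℕ) = l - (j + 1) := by omega
  rcases Fin.exists_fin_two.1 ⟨d j.rev, rfl⟩ with h | h <;> simp [h, hj]

/-- The layout of the variables: `.inl (i, j)` is the address bit `z_{i,j}`, `.inr i` is `y_i`. -/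
def reorderVar (q l : ℕ) : (Fin q × Fin l) ⊕ Fin q ≃ Fin (q * (l + 1)) :=
  calc (Fin q × Fin l) ⊕ Fin q
    _ ≃ Fin (q * l) ⊕ Fin q := finProdFinEquiv.sumCongr (Equiv.refl _)
    _ ≃ Fin (q * l + q) := finSumFinEquiv
    _ ≃ Fin (q * (l + 1)) := finCongr (Nat.mul_succ q l).symm

lemma apply_reorderVar_inl (x : Fin (q * (l + 1)) → Bool) (i : Fin q) (j : Fin l) :
    x (reorderVar q l (.inl (i, j))) = zOf q l x i j := by
  refine congrArg x (Fin.ext ?_)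
  simp [reorderVar, Trans.trans, mul_comm, add_comm]

lemma apply_reorderVar_inr (x : Fin (q * (l + 1)) → Bool) (i : Fin q) :
    x (reorderVar q l (.inr i)) = yOf q l x i := rfl

/-- The reading order `z_{1,1}, …, z_{1,l}, y_1, z_{2,1}, …, z_{2,l}, y_2, …`, in which each value
bit follows its address; `(i, j)` is the `j`-th position of the `i`-th block. -/
def blockVar (q l : ℕ) : Fin q × Fin (l + 1) ≃ Fin (q * (l + 1)) :=
  calc Fin q × Fin (l + 1)
    _ ≃ Fin q × (Fin l ⊕ Fin 1) := (Equiv.refl _).prodCongr finSumFinEquiv.symm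
    _ ≃ (Fin q × Fin l) ⊕ (Fin q × Fin 1) := Equiv.prodSumDistrib _ _ _
    _ ≃ (Fin q × Fin l) ⊕ Fin q := (Equiv.refl _).sumCongr (Equiv.prodUnique _ _)
    _ ≃ Fin (q * (l + 1)) := reorderVar q l

lemma apply_blockVar_castSucc (x : Fin (q * (l + 1)) → Bool) (i : Fin q) (j : Fin l) :
    x (blockVar q l (i, j.castSucc)) = zOf q l x i j := by
  rw [← apply_reorderVar_inl]
  simp [blockVar, Trans.trans]

lemma apply_blockVar_last (x : Fin (q * (l + 1)) → Bool) (i : Fin q) :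
    x (blockVar q l (i, Fin.last l)) = yOf q l x i := by
  rw [← apply_reorderVar_inr]
  simp [blockVar, Trans.trans]

lemma ordPartial_eq_some_iff {f : (Fin q → Bool) → Bool}
    {addr : (Fin (q * (l + 1)) → Bool) → Fin q → ℕ} {x : Fin (q * (l + 1)) → Bool} {b : Bool} :
    ordPartial q l f addr x = some b ↔
      ∃ σ : Equiv.Perm (Fin q), (∀ i, addr x i = σ i) ∧ f (fun j => yOf q l x (σ.symm j)) = b := by
  unfold ordPartial
  split_ifs with h
  · have choose_eq {σ : Equiv.Perm (Fin q)} (hσ : ∀ i, addr x i = σ i) : h.choose = σ :=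
      Equiv.ext fun i => Fin.ext ((h.choose_spec i).symm.trans (hσ i))
    rw [Option.some.injEq]
    exact ⟨fun hb => ⟨_, h.choose_spec, hb⟩, fun ⟨σ, hσ, hb⟩ => by rwa [choose_eq hσ]⟩
  · exact iff_of_false (by simp) fun ⟨σ, hσ, _⟩ => h ⟨σ, hσ⟩

end Reordering

namespace KOBDD

variable {k q l w : ℕ}

theorem RepresentsPartial.exists_represents_of_ordPartial {N : KOBDD k (q * (l + 1)) w}
    {f : (Fin q → Bool) → Bool} (hq : 0 < q) (hl : q ≤ 2 ^ l)
    (hN : N.RepresentsPartial (ordPartial q l f (addrOrd q l))) :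
    ∃ M : KOBDD k q w, M.Represents f := by
  have hbin (i : Fin q) : ∃ a, binVal l a = i := exists_binVal_eq (i.isLt.trans_le hl)
  choose a ha using hbin
  let r (v : Fin (q * (l + 1))) : Fin q ⊕ Bool :=
    Sum.elim (fun p => .inr (a p.1 p.2)) .inl ((reorderVar q l).symm v)
  have existsUnique_r (i : Fin q) : ∃! v, r v = .inl i :=
    ⟨reorderVar q l (.inr i), by simp [r], fun v hv => by
      obtain ⟨p | i', rfl⟩ := (reorderVar q l).surjective v <;> simp_all [r]⟩
  obtain ⟨M, hM⟩ := N.exists_accepts_iff_substitute hq existsUnique_r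
  refine ⟨M, fun y => (hM y).trans (hN _ _ (ordPartial_eq_some_iff.2 ⟨Equiv.refl _, ?_, ?_⟩))⟩
  · intro i
    rw [Equiv.refl_apply, ← ha, addrOrd]
    congr 1
    funext j
    simp [← apply_reorderVar_inl, r]
  · simp [← apply_reorderVar_inr, r]

/-- The step of `M` in layer `t` reading the bit `b` as its variable with address `a`; addresses
that are out of range leave the state unchanged. -/
def addrStep (M : KOBDD k q w) (t : Fin k) (a : Fin l → Bool) (s : Fin w) (b : Bool) : Fin w :=
  if h : binVal l a < q then M.tr t (M.ord.symm ⟨binVal l a, h⟩) s b else s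

/-- The final state of `M` when every layer reads `y_1, …, y_q` in this order, each `y_i` as the
variable with address `z_i`. -/
def reorderFinal (M : KOBDD k q w) (l : ℕ) (x : Fin (q * (l + 1)) → Bool) : Fin w :=
  (List.finRange k).foldl (fun s t => (List.finRange q).foldl
    (fun s i => M.addrStep t (zOf q l x i) s (yOf q l x i)) s) M.start

/-- The total function computed by `M` reading addressed bits as in `reorderFinal`. It extends
`ord(f)` when `M` is commutative and represents `f`. -/
def reorder (M : KOBDD k q w) (l : ℕ) (x : Fin (q * (l + 1)) → Bool) : Bool :=
  decide (M.reorderFinal l x ∈ M.acc)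

lemma Commutative.reorderFinal_eq {M : KOBDD k q w} (hM : M.Commutative)
    {x : Fin (q * (l + 1)) → Bool} {σ : Equiv.Perm (Fin q)} (hσ : ∀ i, addrOrd q l x i = σ i) :
    M.reorderFinal l x = M.final fun j => yOf q l x (σ.symm j) := by
  have addrStep_eq (t i s) : M.addrStep t (zOf q l x i) s (yOf q l x i) =
      M.tr t (M.ord.symm (σ i)) s (yOf q l x (σ.symm (σ i))) := by
    have h : binVal l (zOf q l x i) = σ i := hσ i
    simp [addrStep, h]
  simp only [reorderFinal, final, addrStep_eq, ← hM σ]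

theorem Commutative.reorder_eq_of_ordPartial_eq_some {M : KOBDD k q w} (hM : M.Commutative)
    {f : (Fin q → Bool) → Bool} (hf : M.Represents f) {x : Fin (q * (l + 1)) → Bool} {b : Bool}
    (hx : ordPartial q l f (addrOrd q l) x = some b) : M.reorder l x = b := by
  obtain ⟨σ, hσ, rfl⟩ := ordPartial_eq_some_iff.1 hx
  rw [reorder, hM.reorderFinal_eq hσ, Bool.eq_iff_iff, decide_eq_true_iff]
  exact hf _

/-- The `j`-th step inside a block, on pairs of an address register and a state of `M`: the first
`l` steps store the address, the last one applies `addrStep`. -/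
def blockStep (M : KOBDD k q w) (t : Fin k) (j : Fin (l + 1)) (p : (Fin l → Bool) × Fin w)
    (b : Bool) : (Fin l → Bool) × Fin w :=
  j.lastCases (p.1, M.addrStep t p.1 p.2 b) fun j => (Function.update p.1 j b, p.2)

lemma foldl_blockStep (M : KOBDD k q w) (t : Fin k) (x : Fin (q * (l + 1)) → Bool) (i : Fin q)
    (p : (Fin l → Bool) × Fin w) :
    (List.finRange (l + 1)).foldl (fun p j => M.blockStep t j p (x (blockVar q l (i, j)))) p =
      (zOf q l x i, M.addrStep t (zOf q l x i) p.2 (yOf q l x i)) := by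
  have register_eq : (List.finRange l).foldl
      (fun p j => (Function.update p.1 j (zOf q l x i j), p.2)) p = (zOf q l x i, p.2) := by
    rw [List.foldl_hom (fun a => (a, p.2)) (init := p.1)
      (g₁ := fun a j => Function.update a j (zOf q l x i j)) fun _ _ => rfl]
    simp [foldl_update_eq_ite]
  simp [List.finRange_succ_last, List.foldl_map, blockStep, apply_blockVar_castSucc,
    apply_blockVar_last, register_eq]

theorem exists_represents_reorder (M : KOBDD k q w) (l : ℕ) :
    ∃ N : KOBDD k (q * (l + 1)) (2 ^ l * w), N.Represents (M.reorder l) := by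
  obtain ⟨N, hN⟩ := exists_accepts_iff_foldl_mem (finProdFinEquiv.symm.trans (blockVar q l))
    (fun t p => M.blockStep t (finProdFinEquiv.symm p).2) (fun _ => false, M.start)
    {p | p.2 ∈ M.acc}
  have layer_eq (t : Fin k) (x) (p : (Fin l → Bool) × Fin w) :
      ((List.finRange (q * (l + 1))).foldl (fun p v => M.blockStep t (finProdFinEquiv.symm v).2 p
        (x (blockVar q l (finProdFinEquiv.symm v)))) p).2 =
      (List.finRange q).foldl (fun s i => M.addrStep t (zOf q l x i) s (yOf q l x i)) p.2 := by
    rw [foldl_finRange_mul fun p ij => M.blockStep t ij.2 p (x (blockVar q l ij))]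
    simp only [foldl_blockStep]
    exact (List.foldl_hom Prod.snd fun _ _ => rfl).symm
  have final_eq (x) : ((List.finRange k).foldl (fun p t => (List.finRange (q * (l + 1))).foldl
      (fun p v => M.blockStep t (finProdFinEquiv.symm v).2 p
        (x (blockVar q l (finProdFinEquiv.symm v)))) p) (fun _ => false, M.start)).2 =
      M.reorderFinal l x :=
    (List.foldl_hom Prod.snd fun p t => (layer_eq t x p).symm).symm
  have card_states : Fintype.card ((Fin l → Bool) × Fin w) = 2 ^ l * w := by simp
  rw [← card_states]
  refine ⟨N, fun x => (hN x).trans ?_⟩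
  rw [reorder, decide_eq_true_iff, ← final_eq x]
  exact Iff.rfl

end KOBDD

/-- total extension of `ord(f)` with the same lower bound and a
kOBDD of width `2^{⌈log₂ q⌉}·w`. -/
theorem stmt2 (k q d w : ℕ) (hk : 1 ≤ k) (hq : 2 ≤ q)
    (f : (Fin q → Bool) → Bool)
    (hlow : ∀ (w' : ℕ) (M : KOBDD k q w'), M.Represents f → d ≤ w')
    (M : KOBDD k q w) (hrep : M.Represents f) (hcomm : M.Commutative) :
    ∃ g : (Fin (q * (Nat.clog 2 q + 1)) → Bool) → Bool,
      (∀ x b, ordF q f x = some b → g x = b) ∧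
      (∀ (w' : ℕ) (N : KOBDD k (q * (Nat.clog 2 q + 1)) w'), N.Represents g → d ≤ w') ∧
      (∃ w' : ℕ, w' ≤ 2 ^ Nat.clog 2 q * w ∧
          ∃ N : KOBDD k (q * (Nat.clog 2 q + 1)) w', N.Represents g) := by
  have hl : q ≤ 2 ^ Nat.clog 2 q := Nat.le_pow_clog one_lt_two q
  have agrees (x b) (hx : ordF q f x = some b) : M.reorder (Nat.clog 2 q) x = b :=
    hcomm.reorder_eq_of_ordPartial_eq_some hrep hx
  refine ⟨M.reorder (Nat.clog 2 q), agrees, fun w' N hN => ?_, _, le_rfl,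
    M.exists_represents_reorder _⟩
  have hN' : N.RepresentsPartial (ordF q f) := fun x b hx => agrees x b hx ▸ hN x
  obtain ⟨M', hM'⟩ := hN'.exists_represents_of_ordPartial (by omega) hl
  exact hlow w' M' hM'
end

section
/- Let q ≥ 2 be an integer and f : {0,1}^q → {0,1} a Boolean function. If there is a commutative quantum OBDD of width w representing f with bounded error, then there is a quantum OBDD of width 2^{⌈log₂ w⌉ + ⌈log₂ q⌉} (in particular of width at most 4·w·q) representing the partial function ⊕ord(f) with bounded error (with the same error parameter ε). -/
set_option maxHeartbeats 1000000
/-- A quantum OBDD of width `w` over `n` Boolean variables. -/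
structure QOBDD (n w : ℕ) where
  ord : Equiv.Perm (Fin n)
  G : Fin n → Bool → Matrix.unitaryGroup (Fin w) ℂ
  start : Fin w
  acc : Finset (Fin w)

namespace QOBDD

noncomputable def finalVec {n w : ℕ} (M : QOBDD n w) (x : Fin n → Bool) : Fin w → ℂ :=
  (List.finRange n).foldl
    (fun ψ i => Matrix.mulVec (M.G i (x (M.ord i)) : Matrix (Fin w) (Fin w) ℂ) ψ)
    (Pi.single M.start 1)

noncomputable def acceptProb {n w : ℕ} (M : QOBDD n w) (x : Fin n → Bool) : ℝ :=
  ∑ j ∈ M.acc, Complex.normSq (M.finalVec x j)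

/-- `M` represents the total function `f` with margin `ε`. -/
def Represents {n w : ℕ} (M : QOBDD n w) (ε : ℝ) (f : (Fin n → Bool) → Bool) : Prop :=
  ∀ x, (f x = true → 1 / 2 + ε ≤ M.acceptProb x) ∧
       (f x = false → M.acceptProb x ≤ 1 / 2 - ε)

/-- `M` represents the partial function `F` with margin `ε`. -/
def RepresentsPartial {n w : ℕ} (M : QOBDD n w) (ε : ℝ)
    (F : (Fin n → Bool) → Option Bool) : Prop :=
  ∀ x, (F x = some true → 1 / 2 + ε ≤ M.acceptProb x) ∧
       (F x = some false → M.acceptProb x ≤ 1 / 2 - ε)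

/-- The QOBDD obtained by reordering: order `π`, matrices `G' i = G (ord⁻¹ (π i))`. -/
def reorder {n w : ℕ} (M : QOBDD n w) (π : Equiv.Perm (Fin n)) : QOBDD n w :=
  ⟨π, fun i => M.G (M.ord.symm (π i)), M.start, M.acc⟩

end QOBDD
/-!
A QOBDD for `⊕ord(f)` can simulate a commutative QOBDD `M` for `f`. It reads the input block by
block, `z_{i,1}, …, z_{i,l}, y_i`, and keeps a product state `|u⟩ ⊗ |a⟩` of a state `u` of `M` and
an `l`-bit address `a`. Each bit `z_{i,j}` is added to `a` modulo 2. The address is therefore never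
erased, which would not be unitary, and after the `z`-bits of block `i` it is the binary code of
`θ(i) - 1`. Reading `y_i` then triggers the gate that `M` uses for variable `θ(i)`. On the domain of
`⊕ord(f)`, `θ` is a permutation, so in the end `u` is the final state of `M` reordered along `θ`;
commutativity of `M` says that this reordered QOBDD represents `f`.
-/

open Matrix

section OrderedProd

/-- The product `U (n - 1) * ⋯ * U 1 * U 0`, the operator carried out by applying the gates
`U 0, U 1, …` one after the other to a column vector. -/
def orderedProd {G : Type*} [Monoid G] {n : ℕ} (U : Fin n → G) : G :=
  (List.ofFn U).reverse.prod

variable {G : Type*} [Monoid G] {m n : ℕ}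

lemma orderedProd_zero (U : Fin 0 → G) : orderedProd U = 1 := by
  simp [orderedProd]

lemma orderedProd_succ (U : Fin (n + 1) → G) :
    orderedProd U = U (Fin.last n) * orderedProd fun i => U i.castSucc := by
  simp only [orderedProd, List.ofFn_succ', List.concat_eq_append, List.reverse_append,
    List.reverse_singleton, List.singleton_append, List.prod_cons]

lemma orderedProd_one : orderedProd (fun _ : Fin n => (1 : G)) = 1 := by
  simp [orderedProd, List.ofFn_const]

lemma orderedProd_mul (U : Fin (m * n) → G) :
    orderedProd U = orderedProd fun i => orderedProd fun j => U (finProdFinEquiv (i, j)) := by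
  have hindex (i : Fin m) (j : Fin n) (h : (i : ℕ) * n + j < m * n) :
      (⟨i * n + j, h⟩ : Fin (m * n)) = finProdFinEquiv (i, j) :=
    Fin.ext (by simp [mul_comm, add_comm])
  simp only [orderedProd, List.ofFn_mul, hindex, List.reverse_flatten, List.map_ofFn,
    List.prod_flatten, List.map_reverse]
  rfl

lemma orderedProd_mulVec_of_intertwine {R κ ι : Type*} [Semiring R] [Fintype κ] [DecidableEq κ]
    [Fintype ι] [DecidableEq ι] (U : Fin n → Matrix κ κ R) (V : Fin n → Matrix ι ι R)
    (T : ℕ → (κ → R) → ι → R) (hT : ∀ i u, V i *ᵥ T i u = T (i + 1) (U i *ᵥ u)) (u : κ → R) :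
    orderedProd V *ᵥ T 0 u = T n (orderedProd U *ᵥ u) := by
  induction n with
  | zero => simp [orderedProd_zero]
  | succ n ih =>
    rw [orderedProd_succ, orderedProd_succ, ← mulVec_mulVec, ← mulVec_mulVec,
      ih _ _ fun i => hT i.castSucc]
    exact hT (Fin.last n) _

end OrderedProd

section States

variable {R κ δ ι α : Type*} [Zero R] [DecidableEq α]

/-- The state `u` of a register `κ`, seen as a state of a larger register `ι` that consists of
`κ` and of unused basis states `δ`. -/
def padVec (ρ : κ ⊕ δ ≃ ι) (u : κ → R) : ι → R :=
  Sum.elim u 0 ∘ ρ.symm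

lemma padVec_single [DecidableEq κ] [DecidableEq ι] (ρ : κ ⊕ δ ≃ ι) (k : κ) (r : R) :
    padVec ρ (Pi.single k r) = Pi.single (ρ (.inl k)) r := by
  ext i
  obtain ⟨p, rfl⟩ := ρ.surjective i
  cases p <;> simp [padVec, Pi.single_apply]

/-- The product state `|u⟩ ⊗ |a⟩`, whose second register is in the basis state `a`. -/
def tensorBasis (u : κ → R) (a : α) : κ × α → R :=
  fun p => if p.2 = a then u p.1 else 0

lemma tensorBasis_single [DecidableEq κ] (k : κ) (a : α) (r : R) :
    tensorBasis (Pi.single k r) a = Pi.single (k, a) r := by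
  ext ⟨j, b⟩
  by_cases hb : b = a <;> simp [tensorBasis, Pi.single_apply, hb]

lemma sum_normSq_tensorBasis [Fintype α] (A : Finset κ) (u : κ → ℂ) (a : α) :
    ∑ p ∈ A ×ˢ Finset.univ, Complex.normSq (tensorBasis u a p) =
      ∑ k ∈ A, Complex.normSq (u k) := by
  simp [Finset.sum_product, tensorBasis, apply_ite Complex.normSq]

end States

section Gates

variable {R κ δ ι α : Type*} [CommRing R] [StarRing R] [Fintype κ] [DecidableEq κ]
  [Fintype δ] [DecidableEq δ] [Fintype ι] [DecidableEq ι] [Fintype α] [DecidableEq α]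

/-- The extension of a unitary on a register `κ` by the identity on unused basis states `δ`. -/
def padUnitary (ρ : κ ⊕ δ ≃ ι) (U : unitaryGroup κ R) : unitaryGroup ι R :=
  ⟨reindex ρ ρ (fromBlocks (U : Matrix κ κ R) 0 0 1), by
    have hU : (U : Matrix κ κ R) * (U : Matrix κ κ R)ᴴ = 1 := mem_unitaryGroup_iff.mp U.2
    simp [mem_unitaryGroup_iff, star_eq_conjTranspose, conjTranspose_submatrix,
      submatrix_mul_equiv, fromBlocks_conjTranspose, fromBlocks_multiply, hU]⟩

lemma padUnitary_mulVec_padVec (ρ : κ ⊕ δ ≃ ι) (U : unitaryGroup κ R) (u : κ → R) :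
    (padUnitary ρ U : Matrix ι ι R) *ᵥ padVec ρ u = padVec ρ ((U : Matrix κ κ R) *ᵥ u) := by
  simp [padUnitary, padVec, submatrix_mulVec_equiv, Function.comp_assoc, fromBlocks_mulVec]

/-- The gate `|u⟩ ⊗ |a⟩ ↦ |u⟩ ⊗ |σ a⟩`. -/
def permuteGate (κ R : Type*) [CommRing R] [StarRing R] [Fintype κ] [DecidableEq κ]
    (σ : Equiv.Perm α) : unitaryGroup (κ × α) R :=
  ⟨Equiv.Perm.permMatrix R ((Equiv.refl κ).prodCongr σ.symm), by
    rw [mem_unitaryGroup_iff, star_eq_conjTranspose, conjTranspose_permMatrix, ← permMatrix_mul,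
      inv_mul_cancel, permMatrix_one]⟩

lemma permuteGate_mulVec_tensorBasis (σ : Equiv.Perm α) (u : κ → R) (a : α) :
    (permuteGate κ R σ : Matrix (κ × α) (κ × α) R) *ᵥ tensorBasis u a =
      tensorBasis u (σ a) := by
  ext ⟨k, b⟩
  simp [permuteGate, permMatrix_mulVec, tensorBasis, Equiv.symm_apply_eq]

/-- The gate `|u⟩ ⊗ |a⟩ ↦ U a |u⟩ ⊗ |a⟩`. -/
def controlledGate (U : α → unitaryGroup κ R) : unitaryGroup (κ × α) R :=
  ⟨blockDiagonal fun a => (U a : Matrix κ κ R), by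
    have hU (a : α) : (U a : Matrix κ κ R) * (U a : Matrix κ κ R)ᴴ = 1 :=
      mem_unitaryGroup_iff.mp (U a).2
    rw [mem_unitaryGroup_iff, star_eq_conjTranspose, blockDiagonal_conjTranspose,
      ← blockDiagonal_mul]
    simp only [hU]
    exact blockDiagonal_one⟩

lemma controlledGate_mulVec_tensorBasis (U : α → unitaryGroup κ R) (u : κ → R) (a : α) :
    (controlledGate U : Matrix (κ × α) (κ × α) R) *ᵥ tensorBasis u a =
      tensorBasis ((U a : Matrix κ κ R) *ᵥ u) a := by
  ext ⟨k, b⟩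
  by_cases hb : b = a <;>
    simp [controlledGate, mulVec, dotProduct, tensorBasis, blockDiagonal_apply,
      Fintype.sum_prod_type, hb]

end Gates

namespace QOBDD

variable {n w W : ℕ}

lemma finalVec_eq_orderedProd_mulVec (M : QOBDD n w) (x : Fin n → Bool) :
    M.finalVec x = orderedProd (fun i => (M.G i (x (M.ord i))).1) *ᵥ Pi.single M.start 1 := by
  have hfold (L : List (Fin n)) (ψ : Fin w → ℂ) :
      L.foldl (fun ψ i => (M.G i (x (M.ord i))).1 *ᵥ ψ) ψ =
        (L.map fun i => (M.G i (x (M.ord i))).1).reverse.prod *ᵥ ψ := by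
    induction L generalizing ψ with
    | nil => simp
    | cons i L ih => simp [ih]
  rw [finalVec, hfold, orderedProd, List.ofFn_eq_map]

variable {κ δ : Type*} [Fintype κ] [DecidableEq κ] [Fintype δ] [DecidableEq δ]

/-- The QOBDD whose gates `G` act on a register `κ`, encoded by `ρ` into `W` basis states. -/
def ofRegister (ρ : κ ⊕ δ ≃ Fin W) (ord : Equiv.Perm (Fin n))
    (G : Fin n → Bool → unitaryGroup κ ℂ) (start : κ) (acc : Finset κ) : QOBDD n W where
  ord := ord
  G i b := padUnitary ρ (G i b)
  start := ρ (.inl start)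
  acc := acc.map (Function.Embedding.inl.trans ρ.toEmbedding)

lemma acceptProb_ofRegister (ρ : κ ⊕ δ ≃ Fin W) (ord : Equiv.Perm (Fin n))
    (G : Fin n → Bool → unitaryGroup κ ℂ) (start : κ) (acc : Finset κ) (x : Fin n → Bool) :
    (ofRegister ρ ord G start acc).acceptProb x =
      ∑ k ∈ acc, Complex.normSq
        ((orderedProd (fun i => (G i (x (ord i))).1) *ᵥ Pi.single start 1) k) := by
  have hfinal : (ofRegister ρ ord G start acc).finalVec x =
      padVec ρ (orderedProd (fun i => (G i (x (ord i))).1) *ᵥ Pi.single start 1) := by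
    simp only [finalVec_eq_orderedProd_mulVec, ofRegister, ← padVec_single]
    exact orderedProd_mulVec_of_intertwine _ _ (fun _ => padVec ρ)
      (fun _ u => padUnitary_mulVec_padVec ρ _ u) _
  rw [acceptProb, hfinal]
  simp [ofRegister, padVec]

end QOBDD

section Address

variable {q l : ℕ} {ι : Type*}

/-- The permutation `b ↦ b ⊕ t e_j` of the bit strings, where `e_j` is the `j`-th unit string. -/
def xorBit [DecidableEq ι] (j : ι) (t : Bool) : Equiv.Perm (ι → Bool) :=
  Function.Involutive.toPerm (fun b => Function.update b j (b j ^^ t)) fun b => by simp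

lemma xorBit_apply [DecidableEq ι] (j : ι) (t : Bool) (b : ι → Bool) :
    xorBit j t b = Function.update b j (b j ^^ t) :=
  rfl

lemma orderedProd_permuteGate_xorBit_mulVec {R κ : Type*} [CommRing R] [StarRing R] [Fintype κ]
    [DecidableEq κ] (z a : Fin l → Bool) (u : κ → R) :
    orderedProd (fun j => (permuteGate κ R (xorBit j (z j))).1) *ᵥ tensorBasis u a =
      tensorBasis u fun j => a j ^^ z j := by
  let partialXor (c : ℕ) : Fin l → Bool := fun k => if (k : ℕ) < c then a k ^^ z k else a k
  have hstep (j : Fin l) : xorBit j (z j) (partialXor j) = partialXor (j + 1) := by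
    funext k
    rcases eq_or_ne k j with rfl | hk
    · simp [xorBit_apply, partialXor]
    · have hk' : (k : ℕ) ≠ j := Fin.val_ne_of_ne hk
      simp only [xorBit_apply, partialXor, Function.update_of_ne hk, Nat.lt_succ_iff_lt_or_eq, hk',
        or_false]
  have h := orderedProd_mulVec_of_intertwine (fun _ => 1)
    (fun j => (permuteGate κ R (xorBit j (z j))).1) (fun c u => tensorBasis u (partialXor c))
    (fun j u => by rw [permuteGate_mulVec_tensorBasis, hstep, one_mulVec]) u
  simpa [orderedProd_one, partialXor] using h

/-- The bitwise exclusive or of the first `k` of the words `z 0, …, z (q - 1)`. -/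
def prefixXor (z : Fin q → ι → Bool) (k : ℕ) (j : ι) : Bool :=
  Nat.bodd (Finset.univ.filter fun i : Fin q => (i : ℕ) < k ∧ z i j = true).card

lemma prefixXor_zero (z : Fin q → ι → Bool) : prefixXor z 0 = fun _ => false := by
  funext j
  simp [prefixXor]

lemma prefixXor_succ (z : Fin q → ι → Bool) (i : Fin q) :
    prefixXor z (i + 1) = fun j => prefixXor z i j ^^ z i j := by
  funext j
  have hinsert : (Finset.univ.filter fun i' : Fin q => (i' : ℕ) < i + 1) =
      insert i (Finset.univ.filter fun i' : Fin q => (i' : ℕ) < i) := by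
    ext i'
    simp [Order.lt_add_one_iff, le_iff_eq_or_lt, Fin.ext_iff]
  simp only [prefixXor, ← Finset.filter_filter, hinsert, Finset.filter_insert]
  cases hz : z i j <;> simp [Nat.bodd_succ]

lemma xorZ_eq_prefixXor (x : Fin (q * (l + 1)) → Bool) (i : Fin q) :
    xorZ q l x i = prefixXor (zOf q l x) (i + 1) := by
  funext j
  simp [xorZ, prefixXor, Nat.mod_two_of_bodd]

lemma exists_perm_of_ordPartial_eq_some {f : (Fin q → Bool) → Bool}
    {addr : (Fin (q * (l + 1)) → Bool) → Fin q → ℕ} {x : Fin (q * (l + 1)) → Bool} {b : Bool}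
    (h : ordPartial q l f addr x = some b) :
    ∃ σ : Equiv.Perm (Fin q), (∀ i, addr x i = σ i) ∧ f (fun j => yOf q l x (σ.symm j)) = b := by
  rw [ordPartial] at h
  split_ifs at h with hσ
  exact ⟨hσ.choose, hσ.choose_spec, Option.some.inj h⟩

end Address

section BlockOrder

variable {q l : ℕ}

/-- The variable order `z_{1,1}, …, z_{1,l}, y_1, z_{2,1}, …, z_{q,l}, y_q`, sending positions to
indices in the layout `z_{1,1}, …, z_{q,l}, y_1, …, y_q` of the input. Position `c` of block `i` is
`finProdFinEquiv (i, c)`. -/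
def blockOrder (q l : ℕ) : Equiv.Perm (Fin (q * (l + 1))) :=
  finProdFinEquiv.symm.trans <| ((Equiv.refl _).prodCongr finSumFinEquiv.symm).trans <|
    (Equiv.prodSumDistrib ..).trans <| (finProdFinEquiv.sumCongr (Equiv.prodUnique ..)).trans <|
    finSumFinEquiv.trans <| finCongr (Nat.mul_add_one q l).symm

lemma apply_blockOrder_castSucc (x : Fin (q * (l + 1)) → Bool) (i : Fin q) (j : Fin l) :
    x (blockOrder q l (finProdFinEquiv (i, j.castSucc))) = zOf q l x i j := by
  rw [zOf]
  congr 1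
  ext
  -- `finCongr_refl` applies only up to unfolding `l + 1`, and then blocks `finSumFinEquiv` lemmas.
  simp [blockOrder, -finCongr_refl, finSumFinEquiv_symm_apply_castSucc, mul_comm, add_comm]

lemma apply_blockOrder_last (x : Fin (q * (l + 1)) → Bool) (i : Fin q) :
    x (blockOrder q l (finProdFinEquiv (i, Fin.last l))) = yOf q l x i := by
  rw [yOf]
  congr 1
  ext
  simp [blockOrder, -finCongr_refl]

end BlockOrder

namespace QOBDD

variable {q w W l : ℕ} (M : QOBDD q w)

/-- The gate with which `M` processes the variable at address `a`, on the value `t`. Addresses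
that name no variable get the identity; they never occur on the domain of the function. -/
noncomputable def addressedGate (t : Bool) (a : Fin l → Bool) : unitaryGroup (Fin w) ℂ :=
  if h : binVal l a < q then M.G (M.ord.symm ⟨binVal l a, h⟩) t else 1

lemma addressedGate_eq_reorder_G {a : Fin l → Bool} {σ : Equiv.Perm (Fin q)} {i : Fin q}
    (h : binVal l a = σ i) (t : Bool) : M.addressedGate t a = (M.reorder σ).G i t := by
  have hlt : binVal l a < q := h ▸ (σ i).isLt
  have haddr : ⟨binVal l a, hlt⟩ = σ i := Fin.ext h
  rw [addressedGate, dif_pos hlt, haddr, reorder]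

/-- The gate at position `c` of a block: an address bit is added to the address register, the
value bit, read last, triggers the addressed gate. -/
noncomputable def blockGate (c : Fin (l + 1)) (t : Bool) :
    unitaryGroup (Fin w × (Fin l → Bool)) ℂ :=
  Fin.lastCases (motive := fun _ => unitaryGroup (Fin w × (Fin l → Bool)) ℂ)
    (controlledGate (M.addressedGate t)) (fun j => permuteGate (Fin w) ℂ (xorBit j t)) c

lemma orderedProd_blockGate_mulVec (x : Fin (q * (l + 1)) → Bool) (i : Fin q) (u : Fin w → ℂ) :
    orderedProd (fun c => (M.blockGate c (x (blockOrder q l (finProdFinEquiv (i, c))))).1) *ᵥ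
        tensorBasis u (prefixXor (zOf q l x) i) =
      tensorBasis ((M.addressedGate (yOf q l x i) (xorZ q l x i)).1 *ᵥ u)
        (prefixXor (zOf q l x) (i + 1)) := by
  simp only [orderedProd_succ, blockGate, Fin.lastCases_last, Fin.lastCases_castSucc,
    apply_blockOrder_last, apply_blockOrder_castSucc]
  rw [← mulVec_mulVec, orderedProd_permuteGate_xorBit_mulVec, ← prefixXor_succ,
    controlledGate_mulVec_tensorBasis, xorZ_eq_prefixXor]

variable {δ : Type*} [Fintype δ] [DecidableEq δ]

/-- The QOBDD for `⊕ord`: it runs `M` on a register of width `w`, next to an `l`-bit register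
holding the current address. -/
noncomputable def xorOrdSimulation (ρ : (Fin w × (Fin l → Bool)) ⊕ δ ≃ Fin W) :
    QOBDD (q * (l + 1)) W :=
  ofRegister ρ (blockOrder q l) (fun k => M.blockGate (finProdFinEquiv.symm k).2)
    (M.start, fun _ => false) (M.acc ×ˢ Finset.univ)

lemma acceptProb_xorOrdSimulation (ρ : (Fin w × (Fin l → Bool)) ⊕ δ ≃ Fin W)
    {x : Fin (q * (l + 1)) → Bool} {σ : Equiv.Perm (Fin q)} (hσ : ∀ i, addrXor q l x i = σ i) :
    (M.xorOrdSimulation ρ).acceptProb x =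
      (M.reorder σ).acceptProb fun j => yOf q l x (σ.symm j) := by
  let y : Fin q → Bool := fun j => yOf q l x (σ.symm j)
  let V (k : Fin (q * (l + 1))) := (M.blockGate (finProdFinEquiv.symm k).2 (x (blockOrder q l k))).1
  have hblock (i : Fin q) (u : Fin w → ℂ) :
      orderedProd (fun c => V (finProdFinEquiv (i, c))) *ᵥ
          tensorBasis u (prefixXor (zOf q l x) i) =
        tensorBasis (((M.reorder σ).G i (y (σ i))).1 *ᵥ u) (prefixXor (zOf q l x) (i + 1)) := by
    simp only [V, y, Equiv.symm_apply_apply]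
    rw [orderedProd_blockGate_mulVec, M.addressedGate_eq_reorder_G (hσ i)]
  have hfinal : orderedProd V *ᵥ Pi.single (M.start, fun _ => false) 1 =
      tensorBasis ((M.reorder σ).finalVec y) (prefixXor (zOf q l x) q) := by
    rw [orderedProd_mul, ← tensorBasis_single, ← prefixXor_zero (zOf q l x),
      finalVec_eq_orderedProd_mulVec]
    exact orderedProd_mulVec_of_intertwine _ _
      (fun k u => tensorBasis u (prefixXor (zOf q l x) k)) hblock _
  rw [xorOrdSimulation, acceptProb_ofRegister, hfinal, sum_normSq_tensorBasis]
  rfl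

lemma representsPartial_xorOrdSimulation (ρ : (Fin w × (Fin l → Bool)) ⊕ δ ≃ Fin W) {ε : ℝ}
    {f : (Fin q → Bool) → Bool} (hcomm : ∀ π, (M.reorder π).Represents ε f) :
    (M.xorOrdSimulation ρ).RepresentsPartial ε (ordPartial q l f (addrXor q l)) := by
  refine fun x => ⟨fun h => ?_, fun h => ?_⟩ <;>
    obtain ⟨σ, hσ, hf⟩ := exists_perm_of_ordPartial_eq_some h <;>
    rw [M.acceptProb_xorOrdSimulation ρ hσ]
  · exact (hcomm σ _).1 hf
  · exact (hcomm σ _).2 hf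

end QOBDD

/-- from a commutative bounded-error QOBDD of width `w` for `f` one gets a
bounded-error QOBDD of width `2^{⌈log₂ w⌉+⌈log₂ q⌉}` for `⊕ord(f)`, with the same margin. -/
theorem stmt3 (q w : ℕ) (hq : 2 ≤ q) (f : (Fin q → Bool) → Bool) (ε : ℝ) (hε : 0 < ε)
    (M : QOBDD q w) (hrep : M.Represents ε f)
    (hcomm : ∀ π : Equiv.Perm (Fin q), (M.reorder π).Represents ε f) :
    ∃ N : QOBDD (q * (Nat.clog 2 q + 1)) (2 ^ (Nat.clog 2 w + Nat.clog 2 q)),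
      N.RepresentsPartial ε (xorOrdF q f) := by
  have hcard : w * 2 ^ Nat.clog 2 q ≤ 2 ^ (Nat.clog 2 w + Nat.clog 2 q) := by
    rw [pow_add]
    exact Nat.mul_le_mul_right _ (Nat.le_pow_clog one_lt_two w)
  let ρ : (Fin w × (Fin (Nat.clog 2 q) → Bool)) ⊕
      Fin (2 ^ (Nat.clog 2 w + Nat.clog 2 q) - w * 2 ^ Nat.clog 2 q) ≃
      Fin (2 ^ (Nat.clog 2 w + Nat.clog 2 q)) :=
    Fintype.equivOfCardEq (by simp [Nat.add_sub_cancel' hcard])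
  exact ⟨M.xorOrdSimulation ρ, M.representsPartial_xorOrdSimulation ρ hcomm⟩
end
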